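/- arXiv:1206.3546 — 2 statements merged into one kernel-verified Lean document; each statement's English description precedes it below -/
import Mathlib

section
/- Let K be a UFD of characteristic p > 0, let A = K[x_1,…,x_n] be the polynomial algebra, B = K[x_1^p,…,x_n^p], and let f_1,…,f_m ∈ A with m ≥ 1. Set R_i = B[f_1,…,f_{i-1},f_{i+1},…,f_m] and, for i ≠ j, R_{ij} = B[f_1,…,f_m with f_i and f_j omitted]. Let g ∈ A be irreducible. Then g divides dgcd(f_1,…,f_m) (equivalently, g divides every m×m jacobian minor of f_1,…,f_m) if and only if at least one of the following holds: (i) g ∉ B and g² divides b·f_i + c for some i ∈ {1,…,m} and some b,c ∈ R_i with g ∤ b; (ii) g ∈ B and g divides b·f_i + c for some i ∈ {1,…,m} and some b,c ∈ R_i with g ∤ b; (iii) g divides b_1·f_i + c_1 and g divides b_2·f_j + c_2 for some i ≠ j in {1,…,m} and some b_1,b_2,c_1,c_2 ∈ R_{ij} with g ∤ b_1 and g ∤ b_2. -/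
open MvPolynomial

/-- The monomial `f₁^{α₁} ⋯ f_m^{α_m}` for a multi-index `α ∈ Ω_m` (all exponents `< p`). -/
def pMonomial {S : Type*} [CommRing S] {m p : ℕ} (f : Fin m → S) (α : Fin m → Fin p) : S :=
  ∏ i, f i ^ (α i : ℕ)

/-- `f₁, …, f_m` are `p`-independent over the subring `B`. -/
def pIndependent {S : Type*} [CommRing S] (B : Subring S) {m : ℕ} (p : ℕ) (f : Fin m → S) : Prop :=
  ∀ b : (Fin m → Fin p) → S, (∀ α, b α ∈ B) →
    ∑ α : Fin m → Fin p, b α * pMonomial f α = 0 → ∀ α, b α = 0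

/-- `f₁, …, f_m` form a `p`-basis of `R` over `B`. -/
def IsPBasis {S : Type*} [CommRing S] (B : Subring S) (R : Set S) {m : ℕ} (p : ℕ)
    (f : Fin m → S) : Prop :=
  (↑B ⊆ R) ∧ (∀ α : Fin m → Fin p, pMonomial f α ∈ R) ∧ pIndependent B p f ∧
    ∀ r ∈ R, ∃ b : (Fin m → Fin p) → S, (∀ α, b α ∈ B) ∧
      r = ∑ α : Fin m → Fin p, b α * pMonomial f α

/-- The jacobian determinant of `f₁,…,f_m` w.r.t. the variables `x_{j₁},…,x_{j_m}`. -/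
noncomputable def jacMinor {K : Type*} [CommRing K] {n m : ℕ} (f : Fin m → MvPolynomial (Fin n) K)
    (j : Fin m → Fin n) : MvPolynomial (Fin n) K :=
  (Matrix.of fun i l => pderiv (j l) (f i)).det

/-- The subring `B = K[x₁^p, …, x_n^p]` of `K[x₁,…,x_n]`. -/
noncomputable def pPowers (K : Type*) [CommRing K] (n p : ℕ) : Subring (MvPolynomial (Fin n) K) :=
  (Algebra.adjoin K (Set.range fun i : Fin n => (X i : MvPolynomial (Fin n) K) ^ p)).toSubring

/-- `R_i = B[f₁,…,f̂ᵢ,…,f_m]`. -/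
noncomputable def Ri (K : Type*) [CommRing K] {n m : ℕ} (p : ℕ) (f : Fin m → MvPolynomial (Fin n) K)
    (i : Fin m) : Subring (MvPolynomial (Fin n) K) :=
  Subring.closure (↑(pPowers K n p) ∪ (f '' {j | j ≠ i}))

/-- `R_{ij} = B[f₁,…,f̂ᵢ,…,f̂ⱼ,…,f_m]`. -/
noncomputable def Rij (K : Type*) [CommRing K] {n m : ℕ} (p : ℕ) (f : Fin m → MvPolynomial (Fin n) K)
    (i j : Fin m) : Subring (MvPolynomial (Fin n) K) :=
  Subring.closure (↑(pPowers K n p) ∪ (f '' {l | l ≠ i ∧ l ≠ j}))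

/-- An element is `B`-free if it has no noninvertible factor from `B`. -/
def BFree {S : Type*} [CommRing S] (B : Subring S) (a : S) : Prop :=
  ∀ b ∈ B, b ∣ a → IsUnit b

/-- `C_B(f₁,…,f_m) = B₀(f₁,…,f_m) ∩ A`: those elements of `A` lying in the field of
fractions of `B[f₁,…,f_m]`. -/
def CB {S : Type*} [CommRing S] (B : Subring S) {m : ℕ} (f : Fin m → S) : Set S :=
  {a | ∃ s t : S, s ∈ Subring.closure (↑B ∪ Set.range f) ∧
      t ∈ Subring.closure (↑B ∪ Set.range f) ∧ s ≠ 0 ∧ a * s = t}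

/-- A `B`-derivation of `A`: additive, Leibniz rule, vanishing on `B`. -/
def IsBDerivation {S : Type*} [CommRing S] (B : Subring S) (d : S → S) : Prop :=
  (∀ x y, d (x + y) = d x + d y) ∧ (∀ x y, d (x * y) = x * d y + y * d x) ∧ ∀ b ∈ B, d b = 0

/-!
Let `L` be the residue field of the prime `(g)` and reduce gradients modulo `g`. All `m × m` minors
of the Jacobian matrix vanish in `L` iff `∇f₁, …, ∇f_m` are linearly dependent over `L`, that is,
iff some `∇fᵢ` lies in the span of the others.

The key equivalence, for a set `S` of polynomials: there are `b, c ∈ B[S]` with `g ∤ b` and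
`g ∣ b * f + c` iff `∇f` lies in the `L`-span of `∇g` and `∇S`. Left to right this is the Leibniz
rule. For the converse, the left side says that the class of `f` lies in the subfield `E` of `L`
generated by `B` and `S`. As `L ^ p ⊆ E`, the universal derivation `d : L → Ω[L⁄E]` has kernel `E`,
and by the chain rule `df` is an `L`-linear function of `∇f`, which vanishes on `∇g` and on `∇S`.

Now let `∇fᵢ` be in the span of the other gradients, and write `b * fᵢ + c = g * h`. If `g ∈ B`,
this is (ii). Otherwise `∇g ≠ 0`, and either `g ∣ h`, which is (i), or `h∇g = ∇(b * fᵢ + c)` puts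
`∇g` into the span of the `∇f_l` with `l ≠ i`. Exchanging `∇g` for one of these, `∇fⱼ`, shows
that `∇fᵢ` and `∇fⱼ` lie in the span of `∇g` and the remaining gradients, which is (iii).
-/

section PurelyInseparable

open scoped IntermediateField KaehlerDifferential

theorem subsingleton_kaehlerDifferential_of_adjoin_eq_top {R S : Type*} [CommRing R] [CommRing S]
    [Algebra R S] {s : Set S} (hs : Algebra.adjoin R s = ⊤)
    (hD : ∀ a ∈ s, KaehlerDifferential.D R S a = 0) : Subsingleton Ω[S⁄R] := by
  have hzero : KaehlerDifferential.D R S = 0 := Derivation.ext_of_adjoin_eq_top s hs hD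
  rw [← Submodule.subsingleton_iff S, ← subsingleton_iff_bot_eq_top,
    ← KaehlerDifferential.span_range_derivation R S, hzero]
  simp

variable {F L : Type*} [Field F] [Field L] [Algebra F L] {a : L}

theorem exists_maximal_intermediateField_notMem (ha : a ∉ (algebraMap F L).range) :
    ∃ M : IntermediateField F L, Maximal (a ∉ ·) M := by
  obtain ⟨M, -, hM⟩ := zorn_le_nonempty₀ {E : IntermediateField F L | a ∉ E} (by
    intro c hc hchain E hE
    refine ⟨sSup c, fun ha => ?_, fun _ => le_sSup⟩
    obtain ⟨E', hE', hle⟩ := IntermediateField.adjoin_simple_isCompactElement a c _ ⟨E, hE⟩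
      hchain.directedOn (isLUB_sSup c) (IntermediateField.adjoin_simple_le_iff.2 ha)
    exact hc hE' (IntermediateField.adjoin_simple_le_iff.1 hle)) ⊥ ha
  exact ⟨M, hM⟩

variable {p : ℕ} [Fact p.Prime] [CharP L p]

theorem finrank_adjoin_simple_of_pow_mem_range (ha : a ∉ (algebraMap F L).range)
    (hap : a ^ p ∈ (algebraMap F L).range) : Module.finrank F F⟮a⟯ = p := by
  have hp : p.Prime := Fact.out
  obtain ⟨y, hy⟩ := hap
  have hirr : Irreducible (Polynomial.X ^ p - Polynomial.C y) := by
    refine X_pow_sub_C_irreducible_of_prime hp fun b hb => ha ⟨b, frobenius_inj L p ?_⟩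
    rw [frobenius_def, frobenius_def, ← map_pow, hb, hy]
  have hmonic : (Polynomial.X ^ p - Polynomial.C y).Monic :=
    Polynomial.monic_X_pow_sub_C y hp.ne_zero
  have hroot : Polynomial.aeval a (Polynomial.X ^ p - Polynomial.C y) = 0 := by simp [hy]
  rw [IntermediateField.adjoin.finrank ⟨_, hmonic, hroot⟩,
    ← minpoly.eq_of_irreducible_of_monic hirr hroot hmonic, Polynomial.natDegree_X_pow_sub_C]

theorem adjoin_simple_eq_top_of_forall_mem (hF : ∀ x : L, x ^ p ∈ (algebraMap F L).range)
    (ha : a ∉ (algebraMap F L).range) (hmem : ∀ E : IntermediateField F L, E ≠ ⊥ → a ∈ E) :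
    F⟮a⟯ = ⊤ := by
  refine eq_top_iff.2 fun y _ => ?_
  by_cases hy : y ∈ (algebraMap F L).range
  · obtain ⟨z, rfl⟩ := hy
    exact F⟮a⟯.algebraMap_mem z
  have hdeg : Module.finrank F F⟮y⟯ = p := finrank_adjoin_simple_of_pow_mem_range hy (hF y)
  have : FiniteDimensional F F⟮y⟯ := .of_finrank_pos (hdeg ▸ (Fact.out : p.Prime).pos)
  have hle : F⟮a⟯ ≤ F⟮y⟯ := IntermediateField.adjoin_simple_le_iff.2 <|
    hmem _ fun h => hy (IntermediateField.adjoin_simple_eq_bot_iff.1 h)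
  rw [IntermediateField.eq_of_le_of_finrank_eq hle
    ((finrank_adjoin_simple_of_pow_mem_range ha (hF a)).trans hdeg.symm)]
  exact IntermediateField.mem_adjoin_simple_self F y

theorem mem_range_of_D_eq_zero_of_adjoin_simple_eq_top
    (hF : ∀ x : L, x ^ p ∈ (algebraMap F L).range) (htop : F⟮a⟯ = ⊤)
    (ha : KaehlerDifferential.D F L a = 0) : a ∈ (algebraMap F L).range := by
  have : CharP F p := (algebraMap F L).charP (algebraMap F L).injective p
  have : IsPurelyInseparable F L :=
    (isPurelyInseparable_iff_pow_mem F p).2 fun x => ⟨1, by simpa using hF x⟩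
  have hadj : Algebra.adjoin F {a} = ⊤ := by
    rw [← IntermediateField.adjoin_simple_toSubalgebra_of_isAlgebraic
      (Algebra.IsAlgebraic.isAlgebraic a), htop, IntermediateField.top_toSubalgebra]
  have : Algebra.FiniteType F L := ⟨{a}, by simpa using hadj⟩
  have : Algebra.FormallyUnramified F L :=
    ⟨subsingleton_kaehlerDifferential_of_adjoin_eq_top hadj (by simpa using ha)⟩
  rw [Algebra.FormallyUnramified.range_eq_top_of_isPurelyInseparable F L]
  trivial

theorem mem_range_of_D_eq_zero (hF : ∀ x : L, x ^ p ∈ (algebraMap F L).range)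
    (ha : KaehlerDifferential.D F L a = 0) : a ∈ (algebraMap F L).range := by
  by_contra hnot
  -- Over a maximal `M` without `a`, every proper extension contains `a`, so `L` is `M(a)`, of
  -- degree `p`; there `d a = 0` makes `L` both unramified and purely inseparable over `M`.
  obtain ⟨M, haM, hmax⟩ := exists_maximal_intermediateField_notMem hnot
  have hM : ∀ x : L, x ^ p ∈ (algebraMap M L).range := fun x => by
    obtain ⟨y, hy⟩ := hF x
    exact ⟨algebraMap F M y, hy⟩
  have haM' : a ∉ (algebraMap M L).range := by
    rintro ⟨z, rfl⟩
    exact haM z.2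
  have htop : M⟮a⟯ = ⊤ := adjoin_simple_eq_top_of_forall_mem hM haM' fun E hE => by
    by_contra haE
    have hle : E.restrictScalars F ≤ M :=
      hmax haE fun x hx => E.algebraMap_mem ⟨x, hx⟩
    exact hE (eq_bot_iff.2 fun x hx => IntermediateField.mem_bot.2 ⟨⟨x, hle hx⟩, rfl⟩)
  have hDM : KaehlerDifferential.D M L a = 0 := by
    simpa [ha] using (KaehlerDifferential.map_D F M L L a).symm
  exact haM' (mem_range_of_D_eq_zero_of_adjoin_simple_eq_top hM htop hDM)

end PurelyInseparable

section LinearAlgebra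

variable {k V ι : Type*} [DivisionRing k] [AddCommGroup V] [Module k V] {v : ι → V} {x : V}

theorem not_linearIndependent_iff_exists_mem_span :
    ¬ LinearIndependent k v ↔ ∃ i, v i ∈ Submodule.span k (v '' {l | l ≠ i}) := by
  simp only [linearIndependent_iff_notMem_span, not_forall, not_not, ← Set.compl_eq_univ_sdiff]
  rfl

theorem exists_mem_span_insert_image_sdiff {s : Set ι} (hx : x ≠ 0)
    (hxs : x ∈ Submodule.span k (v '' s)) :
    ∃ j ∈ s, v j ∈ Submodule.span k (insert x (v '' (s \ {j}))) := by
  classical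
  obtain ⟨c, hc, rfl⟩ := (Finsupp.mem_span_image_iff_linearCombination k).1 hxs
  obtain ⟨j, hj⟩ : c.support.Nonempty :=
    Finsupp.support_nonempty_iff.2 fun h => hx (by rw [h, map_zero])
  have hrest : Finsupp.linearCombination k v (c.erase j) ∈ Submodule.span k (v '' (s \ {j})) := by
    refine (Finsupp.mem_span_image_iff_linearCombination k).2 ⟨_, fun l hl => ?_, rfl⟩
    rw [Finset.mem_coe, Finsupp.support_erase, Finset.mem_erase] at hl
    exact ⟨hc hl.2, hl.1⟩
  have hsplit : Finsupp.linearCombination k v c =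
      c j • v j + Finsupp.linearCombination k v (c.erase j) := by
    rw [← Finsupp.linearCombination_single, ← map_add, Finsupp.single_add_erase]
  refine ⟨j, hc hj, Submodule.mem_span_insert.2
    ⟨(c j)⁻¹, -(c j)⁻¹ • _, Submodule.smul_mem _ _ hrest, ?_⟩⟩
  rw [hsplit, smul_add, inv_smul_smul₀ (Finsupp.mem_support_iff.1 hj), neg_smul,
    add_neg_cancel_right]

theorem exists_ne_mem_span_insert_of_mem_span {i : ι} (hx : x ≠ 0)
    (hxi : x ∈ Submodule.span k (v '' {l | l ≠ i}))
    (hvi : v i ∈ Submodule.span k (v '' {l | l ≠ i})) :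
    ∃ j, i ≠ j ∧ v i ∈ Submodule.span k (insert x (v '' {l | l ≠ i ∧ l ≠ j})) ∧
      v j ∈ Submodule.span k (insert x (v '' {l | l ≠ i ∧ l ≠ j})) := by
  obtain ⟨j, hji, hvj⟩ := exists_mem_span_insert_image_sdiff hx hxi
  refine ⟨j, Ne.symm hji, Submodule.span_le.2 ?_ hvi, hvj⟩
  rintro _ ⟨l, hl, rfl⟩
  obtain rfl | hlj := eq_or_ne l j
  · exact hvj
  · exact Submodule.subset_span (.inr ⟨l, ⟨hl, hlj⟩, rfl⟩)

theorem exists_mem_span_of_mem_span_insert {i j : ι} (hij : i ≠ j)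
    (hi : v i ∈ Submodule.span k (insert x (v '' {l | l ≠ i ∧ l ≠ j})))
    (hj : v j ∈ Submodule.span k (insert x (v '' {l | l ≠ i ∧ l ≠ j}))) :
    ∃ l, v l ∈ Submodule.span k (v '' {q | q ≠ l}) := by
  by_cases hi' : v i ∈ Submodule.span k (v '' {l | l ≠ i ∧ l ≠ j})
  · exact ⟨i, Submodule.span_mono (Set.image_mono fun _ hl => hl.1) hi'⟩
  have hx : x ∈ Submodule.span k (insert (v i) (v '' {l | l ≠ i ∧ l ≠ j})) :=
    mem_span_insert_exchange hi hi'
  have hsub : insert (v i) (v '' {l | l ≠ i ∧ l ≠ j}) ⊆ v '' {l | l ≠ j} :=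
    Set.insert_subset ⟨i, hij, rfl⟩ (Set.image_mono fun _ hl => hl.2)
  refine ⟨j, Submodule.span_le.2 (Set.insert_subset ?_ ?_) hj⟩
  · exact Submodule.span_mono hsub hx
  · exact ((Set.subset_insert _ _).trans hsub).trans Submodule.subset_span

theorem linearIndependent_row_iff_exists_det_submatrix_ne_zero {k m n : Type*} [Field k]
    [Fintype m] [DecidableEq m] [Finite n] (M : Matrix m n k) :
    LinearIndependent k M.row ↔ ∃ j : m → n, (M.submatrix id j).det ≠ 0 := by
  constructor
  · intro hM
    have := Fintype.ofFinite n
    have hspan : Submodule.span k (Set.range M.col) = ⊤ := by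
      apply Submodule.eq_top_of_finrank_eq
      rw [← Matrix.rank_eq_finrank_span_cols, hM.rank_matrix, Module.finrank_fintype_fun_eq_card]
    obtain ⟨κ, c, -, hc, hli⟩ := exists_linearIndependent' k M.col
    have := hli.finite
    have := Fintype.ofFinite κ
    have hcard : Fintype.card m = Fintype.card κ := by
      rw [← Module.finrank_eq_card_basis (.mk hli (hc.trans hspan).ge),
        Module.finrank_fintype_fun_eq_card]
    let e := Fintype.equivOfCardEq hcard
    refine ⟨c ∘ e, IsUnit.ne_zero ?_⟩
    rw [← Matrix.isUnit_iff_isUnit_det, ← Matrix.linearIndependent_cols_iff_isUnit]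
    exact hli.comp e e.injective
  · rintro ⟨j, hj⟩
    have hrow : LinearIndependent k (M.submatrix id j).row := by
      rwa [Matrix.linearIndependent_rows_iff_isUnit, Matrix.isUnit_iff_isUnit_det,
        isUnit_iff_ne_zero]
    exact .of_comp (LinearMap.funLeft k k j) hrow

end LinearAlgebra

section PPowers

variable {K : Type*} [CommRing K] {n p : ℕ}

theorem C_mem_pPowers (c : K) : C c ∈ pPowers K n p :=
  Subalgebra.algebraMap_mem (Algebra.adjoin K _) c

theorem X_pow_mem_pPowers (k : Fin n) : X k ^ p ∈ pPowers K n p :=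
  Algebra.subset_adjoin ⟨k, rfl⟩

theorem pow_mem_pPowers [Fact p.Prime] [CharP K p] (a : MvPolynomial (Fin n) K) :
    a ^ p ∈ pPowers K n p := by
  induction a using MvPolynomial.induction_on with
  | C c =>
    rw [← C_pow]
    exact C_mem_pPowers _
  | add a b ha hb =>
    rw [add_pow_char]
    exact add_mem ha hb
  | mul_X a k ha =>
    rw [mul_pow]
    exact mul_mem ha (X_pow_mem_pPowers k)

theorem pderiv_eq_zero_of_mem_pPowers [CharP K p] {a : MvPolynomial (Fin n) K}
    (ha : a ∈ pPowers K n p) (k : Fin n) : pderiv k a = 0 := by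
  change a ∈ Algebra.adjoin K _ at ha
  induction ha using Algebra.adjoin_induction with
  | mem x hx =>
    obtain ⟨i, rfl⟩ := hx
    simp
  | algebraMap r => exact pderiv_C
  | add x y _ _ hx hy => simp [hx, hy]
  | mul x y _ _ hx hy => simp [hx, hy]

theorem dvd_of_mem_support_of_pderiv_eq_zero {σ : Type*} [Fact p.Prime] [CharP K p]
    {a : MvPolynomial σ K} {k : σ} (ha : pderiv k a = 0) {s : σ →₀ ℕ} (hs : s ∈ a.support) :
    p ∣ s k := by
  by_contra hdvd
  have hle : Finsupp.single k 1 ≤ s := by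
    rw [Finsupp.single_le_iff, Nat.one_le_iff_ne_zero]
    exact fun h => hdvd (h ▸ dvd_zero p)
  obtain ⟨t, rfl⟩ := exists_add_of_le hle
  have hcoeff : coeff (Finsupp.single k 1 + t) a * ((t k : K) + 1) = 0 := by
    rw [add_comm, ← coeff_pderiv, ha, coeff_zero]
  have hunit : IsUnit ((t k : K) + 1) := by
    rw [← Nat.cast_succ, CharP.isUnit_natCast_iff (R := K) (p := p) Fact.out]
    simpa [add_comm] using hdvd
  exact mem_support_iff.1 hs (hunit.mul_left_eq_zero.1 hcoeff)

theorem mem_pPowers_iff_forall_pderiv_eq_zero [Fact p.Prime] [CharP K p]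
    {a : MvPolynomial (Fin n) K} : a ∈ pPowers K n p ↔ ∀ k, pderiv k a = 0 := by
  refine ⟨pderiv_eq_zero_of_mem_pPowers, fun ha => ?_⟩
  rw [a.as_sum]
  refine sum_mem fun s hs => ?_
  rw [monomial_eq]
  refine mul_mem (C_mem_pPowers _) (prod_mem fun k _ => ?_)
  obtain ⟨d, hd⟩ := dvd_of_mem_support_of_pderiv_eq_zero (p := p) (ha k) hs
  change X k ^ s k ∈ _
  rw [hd, pow_mul]
  exact pow_mem (X_pow_mem_pPowers k) d

theorem degreeOf_pderiv_lt {σ : Type*} {a : MvPolynomial σ K} {k : σ} (ha : pderiv k a ≠ 0) :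
    (pderiv k a).degreeOf k < a.degreeOf k := by
  have hlt : ∀ s ∈ (pderiv k a).support, s k < a.degreeOf k := fun s hs => by
    rw [mem_support_iff, coeff_pderiv] at hs
    simpa [Nat.succ_le_iff] using
      monomial_le_degreeOf k (mem_support_iff.2 (left_ne_zero_of_mul hs))
  obtain ⟨s, hs⟩ := support_nonempty.2 ha
  exact (degreeOf_lt_iff (Nat.zero_lt_of_lt (hlt s hs))).2 hlt

theorem dvd_pderiv_self_iff {σ : Type*} [NoZeroDivisors K] {g : MvPolynomial σ K} {k : σ} :
    g ∣ pderiv k g ↔ pderiv k g = 0 := by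
  refine ⟨fun ⟨c, hc⟩ => ?_, fun h => h ▸ dvd_zero g⟩
  by_contra h0
  have hgc : g ≠ 0 ∧ c ≠ 0 := by rwa [← mul_ne_zero_iff, ← hc]
  have hdeg : (pderiv k g).degreeOf k = g.degreeOf k + c.degreeOf k := by
    rw [hc, degreeOf_mul_eq hgc.1 hgc.2]
  have := degreeOf_pderiv_lt h0
  omega

end PPowers

section ResidueField

theorem exists_mul_add_mem_of_mem_subfieldClosure {A : Type*} [CommRing A] {P : Ideal A}
    [P.IsPrime] {S : Set A} {f : A}
    (hf : algebraMap A P.ResidueField f ∈ Subfield.closure (algebraMap A P.ResidueField '' S)) :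
    ∃ b c, b ∈ Subring.closure S ∧ c ∈ Subring.closure S ∧ b ∉ P ∧ b * f + c ∈ P := by
  obtain ⟨y, hy, z, hz, hyz⟩ := Subfield.mem_closure_iff.1 hf
  rw [← RingHom.map_closure] at hy hz
  obtain ⟨c, hc, rfl⟩ := hy
  obtain ⟨b, hb, rfl⟩ := hz
  by_cases hbP : b ∈ P
  · refine ⟨1, 0, one_mem _, zero_mem _, P.one_notMem, ?_⟩
    rw [← Ideal.algebraMap_residueField_eq_zero] at hbP ⊢
    simpa [hbP] using hyz.symm
  · refine ⟨b, -c, hb, neg_mem hc, hbP, ?_⟩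
    rw [← Ideal.algebraMap_residueField_eq_zero] at hbP ⊢
    rw [map_add, map_mul, map_neg, ← hyz, mul_div_cancel₀ _ hbP, add_neg_cancel]

theorem charP_residueField {A : Type*} [CommRing A] (P : Ideal A) [P.IsPrime] (p : ℕ)
    [Fact p.Prime] [CharP A p] : CharP P.ResidueField p := by
  rw [CharP.charP_iff_prime_eq_zero Fact.out, ← map_natCast (algebraMap A P.ResidueField),
    CharP.cast_eq_zero, map_zero]

variable {K σ : Type*} [CommRing K]

/-- The gradient of a polynomial reduced modulo a prime ideal `P`, a vector over the residue
field of `P`. Divisibility of Jacobian minors by a prime polynomial is linear dependence of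
these vectors. -/
noncomputable def residueGrad (P : Ideal (MvPolynomial σ K)) [P.IsPrime] :
    Derivation K (MvPolynomial σ K) (σ → P.ResidueField) :=
  .mk' (LinearMap.pi fun k =>
      (IsScalarTower.toAlgHom K (MvPolynomial σ K) P.ResidueField).toLinearMap ∘ₗ
        (pderiv k).toLinearMap) (by intro a b; ext k; simp [Algebra.smul_def])

variable {P : Ideal (MvPolynomial σ K)} [P.IsPrime]

theorem residueGrad_apply (a : MvPolynomial σ K) (k : σ) :
    residueGrad P a k = algebraMap _ P.ResidueField (pderiv k a) := rfl

theorem residueGrad_mul (a b : MvPolynomial σ K) :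
    residueGrad P (a * b) = algebraMap _ P.ResidueField a • residueGrad P b +
      algebraMap _ P.ResidueField b • residueGrad P a := by
  simp only [Derivation.leibniz, algebraMap_smul]

theorem residueGrad_mul_of_mem {a : MvPolynomial σ K} (ha : a ∈ P) (b : MvPolynomial σ K) :
    residueGrad P (a * b) = algebraMap _ P.ResidueField b • residueGrad P a := by
  rw [residueGrad_mul, Ideal.algebraMap_residueField_eq_zero.2 ha, zero_smul, zero_add]

theorem D_algebraMap_residueField [Fintype σ] {F : Type*} [Field F] [Algebra F P.ResidueField]
    (hF : ∀ c : K, algebraMap _ P.ResidueField (C c : MvPolynomial σ K) ∈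
      (algebraMap F P.ResidueField).range) (a : MvPolynomial σ K) :
    KaehlerDifferential.D F P.ResidueField (algebraMap _ _ a) =
      Fintype.linearCombination P.ResidueField
        (fun k => KaehlerDifferential.D F P.ResidueField
          (algebraMap (MvPolynomial σ K) _ (X k))) (residueGrad P a) := by
  induction a using MvPolynomial.induction_on with
  | C c =>
    obtain ⟨y, hy⟩ := hF c
    have hc : residueGrad P (C c) = 0 := (residueGrad P).map_algebraMap c
    rw [← hy, Derivation.map_algebraMap, hc, map_zero]
  | add a b ha hb => simp only [map_add, ha, hb]
  | mul_X a k ha =>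
    classical
    have hX : residueGrad P (X k) = Pi.single k 1 := by
      ext l
      simp [residueGrad_apply, pderiv_X, Pi.single_apply, eq_comm, apply_ite]
    rw [residueGrad_mul, hX, map_mul, Derivation.leibniz, map_add, map_smul, map_smul, ha,
      Fintype.linearCombination_apply_single, one_smul]

end ResidueField

section Criterion

variable {K : Type*} [CommRing K] {n p : ℕ} [CharP K p]
  {P : Ideal (MvPolynomial (Fin n) K)} [P.IsPrime] {S : Set (MvPolynomial (Fin n) K)}
  {f b c : MvPolynomial (Fin n) K}

theorem residueGrad_eq_zero_of_mem_pPowers (hb : b ∈ pPowers K n p) : residueGrad P b = 0 := by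
  ext k
  rw [residueGrad_apply, pderiv_eq_zero_of_mem_pPowers hb, map_zero, Pi.zero_apply]

theorem residueGrad_mem_span_of_mem_closure
    (hb : b ∈ Subring.closure (↑(pPowers K n p) ∪ S)) :
    residueGrad P b ∈ Submodule.span P.ResidueField (residueGrad P '' S) := by
  induction hb using Subring.closure_induction with
  | mem x hx =>
    rcases hx with hx | hx
    · exact residueGrad_eq_zero_of_mem_pPowers (P := P) hx ▸ zero_mem _
    · exact Submodule.subset_span ⟨x, hx, rfl⟩
  | zero => exact (residueGrad P).map_zero ▸ zero_mem _
  | one => exact (residueGrad P).map_one_eq_zero ▸ zero_mem _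
  | add x y _ _ hx hy => exact (residueGrad P).map_add x y ▸ add_mem hx hy
  | neg x _ hx => exact (residueGrad P).map_neg x ▸ neg_mem hx
  | mul x y _ _ hx hy =>
    exact residueGrad_mul (P := P) x y ▸
      add_mem (Submodule.smul_mem _ _ hy) (Submodule.smul_mem _ _ hx)

theorem residueGrad_mem_span_insert (hb : b ∈ Subring.closure (↑(pPowers K n p) ∪ S))
    (hc : c ∈ Subring.closure (↑(pPowers K n p) ∪ S)) (hbP : b ∉ P) :
    residueGrad P f ∈ Submodule.span P.ResidueField
      (insert (residueGrad P (b * f + c)) (residueGrad P '' S)) := by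
  have hb0 : algebraMap _ P.ResidueField b ≠ 0 := mt Ideal.algebraMap_residueField_eq_zero.1 hbP
  have hle := Submodule.span_mono (R := P.ResidueField)
    (Set.subset_insert (residueGrad P (b * f + c)) (residueGrad P '' S))
  have hsmul : algebraMap _ P.ResidueField b • residueGrad P f =
      residueGrad P (b * f + c) -
        (algebraMap _ P.ResidueField f • residueGrad P b + residueGrad P c) := by
    rw [map_add, residueGrad_mul]
    abel
  rw [← Submodule.smul_mem_iff _ hb0, hsmul]
  exact sub_mem (Submodule.subset_span (Set.mem_insert _ _))
    (hle (add_mem (Submodule.smul_mem _ _ (residueGrad_mem_span_of_mem_closure hb))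
      (residueGrad_mem_span_of_mem_closure hc)))

theorem pow_mem_range_of_forall_mem_pPowers [Fact p.Prime] {F : Type*} [Field F]
    [Algebra F P.ResidueField] (hF : ∀ b ∈ pPowers K n p,
      algebraMap _ P.ResidueField b ∈ (algebraMap F P.ResidueField).range)
    (x : P.ResidueField) : x ^ p ∈ (algebraMap F P.ResidueField).range := by
  obtain ⟨y, z, -, rfl⟩ := IsFractionRing.div_surjective (A := MvPolynomial (Fin n) K ⧸ P) x
  obtain ⟨a, rfl⟩ := Ideal.Quotient.mk_surjective y
  obtain ⟨b, rfl⟩ := Ideal.Quotient.mk_surjective z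
  change (algebraMap _ P.ResidueField a / algebraMap _ P.ResidueField b) ^ p ∈
    (algebraMap F P.ResidueField).fieldRange
  rw [div_pow, ← map_pow, ← map_pow]
  exact div_mem (hF _ (pow_mem_pPowers a)) (hF _ (pow_mem_pPowers b))

theorem exists_mul_add_mem_of_residueGrad_mem_span [Fact p.Prime]
    (hf : residueGrad P f ∈ Submodule.span P.ResidueField (residueGrad P '' (P ∪ S))) :
    ∃ b c, b ∈ Subring.closure (↑(pPowers K n p) ∪ S) ∧
      c ∈ Subring.closure (↑(pPowers K n p) ∪ S) ∧ b ∉ P ∧ b * f + c ∈ P := by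
  let E := Subfield.closure (algebraMap _ P.ResidueField '' (↑(pPowers K n p) ∪ S))
  have hE : ∀ a ∈ (↑(pPowers K n p) ∪ S : Set (MvPolynomial (Fin n) K)),
      algebraMap _ P.ResidueField a ∈ (algebraMap E P.ResidueField).range := fun a ha =>
    ⟨⟨_, Subfield.subset_closure ⟨a, ha, rfl⟩⟩, rfl⟩
  have hchain := D_algebraMap_residueField fun k => hE _ (.inl (C_mem_pPowers k))
  have hD : KaehlerDifferential.D E P.ResidueField (algebraMap _ _ f) = 0 := by
    rw [hchain, ← LinearMap.mem_ker]
    refine Submodule.span_le.2 ?_ hf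
    rintro _ ⟨a, ha, rfl⟩
    rw [SetLike.mem_coe, LinearMap.mem_ker, ← hchain]
    rcases ha with haP | haS
    · rw [Ideal.algebraMap_residueField_eq_zero.2 haP, map_zero]
    · obtain ⟨y, hy⟩ := hE a (.inr haS)
      rw [← hy, Derivation.map_algebraMap]
  have := charP_residueField P p
  obtain ⟨y, hy⟩ := mem_range_of_D_eq_zero
    (pow_mem_range_of_forall_mem_pPowers fun b hb => hE b (.inl hb)) hD
  exact exists_mul_add_mem_of_mem_subfieldClosure (hy ▸ y.2)

end Criterion

section PrimePolynomial

variable {K : Type*} [CommRing K] {n : ℕ} {g f : MvPolynomial (Fin n) K}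

theorem residueGrad_eq_zero_of_sq_dvd {σ : Type*} {P : Ideal (MvPolynomial σ K)} [P.IsPrime]
    {g a : MvPolynomial σ K} (hg : g ∈ P) (ha : g ^ 2 ∣ a) : residueGrad P a = 0 := by
  obtain ⟨h, rfl⟩ := ha
  rw [sq, mul_assoc, residueGrad_mul_of_mem hg,
    Ideal.algebraMap_residueField_eq_zero.2 (P.mul_mem_right h hg), zero_smul]

variable {p : ℕ} [CharP K p] [(Ideal.span {g}).IsPrime] {S : Set (MvPolynomial (Fin n) K)}

theorem residueGrad_self_eq_zero_iff [IsDomain K] [Fact p.Prime] :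
    residueGrad (Ideal.span {g}) g = 0 ↔ g ∈ pPowers K n p := by
  simp only [mem_pPowers_iff_forall_pderiv_eq_zero, _root_.funext_iff, residueGrad_apply,
    Pi.zero_apply, Ideal.algebraMap_residueField_eq_zero, Ideal.mem_span_singleton,
    dvd_pderiv_self_iff]

theorem residueGrad_mem_span_of_sq_dvd {b c : MvPolynomial (Fin n) K}
    (hb : b ∈ Subring.closure (↑(pPowers K n p) ∪ S))
    (hc : c ∈ Subring.closure (↑(pPowers K n p) ∪ S)) (hgb : ¬ g ∣ b)
    (hdvd : g ^ 2 ∣ b * f + c) :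
    residueGrad (.span {g}) f ∈ Submodule.span (Ideal.span {g}).ResidueField
      (residueGrad (.span {g}) '' S) := by
  have hf := residueGrad_mem_span_insert (f := f) hb hc (mt Ideal.mem_span_singleton.1 hgb)
  rwa [residueGrad_eq_zero_of_sq_dvd (Ideal.mem_span_singleton_self g) hdvd,
    Submodule.span_insert_zero] at hf

theorem residueGrad_mem_span_insert_of_dvd {b c : MvPolynomial (Fin n) K}
    (hb : b ∈ Subring.closure (↑(pPowers K n p) ∪ S))
    (hc : c ∈ Subring.closure (↑(pPowers K n p) ∪ S)) (hgb : ¬ g ∣ b) (hdvd : g ∣ b * f + c) :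
    residueGrad (.span {g}) f ∈ Submodule.span (Ideal.span {g}).ResidueField
      (insert (residueGrad (.span {g}) g) (residueGrad (.span {g}) '' S)) := by
  have hf := residueGrad_mem_span_insert (f := f) hb hc (mt Ideal.mem_span_singleton.1 hgb)
  refine Submodule.span_le.2 (Set.insert_subset ?_ ?_) hf
  · obtain ⟨h, hh⟩ := hdvd
    rw [hh, residueGrad_mul_of_mem (Ideal.mem_span_singleton_self g)]
    exact Submodule.smul_mem _ _ (Submodule.subset_span (Set.mem_insert _ _))
  · exact (Set.subset_insert _ _).trans Submodule.subset_span

theorem exists_dvd_mul_add_of_residueGrad_mem_span_insert [Fact p.Prime]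
    (hf : residueGrad (.span {g}) f ∈ Submodule.span (Ideal.span {g}).ResidueField
      (insert (residueGrad (.span {g}) g) (residueGrad (.span {g}) '' S))) :
    ∃ b c, b ∈ Subring.closure (↑(pPowers K n p) ∪ S) ∧
      c ∈ Subring.closure (↑(pPowers K n p) ∪ S) ∧ ¬ g ∣ b ∧ g ∣ b * f + c := by
  simp only [← Ideal.mem_span_singleton]
  refine exists_mul_add_mem_of_residueGrad_mem_span (Submodule.span_mono ?_ hf)
  rw [← Set.image_insert_eq]
  exact Set.image_mono (Set.insert_subset (.inl (Ideal.mem_span_singleton_self g))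
    Set.subset_union_right)

theorem exists_sq_dvd_or_residueGrad_self_mem_span [Fact p.Prime]
    (hf : residueGrad (.span {g}) f ∈ Submodule.span (Ideal.span {g}).ResidueField
      (residueGrad (.span {g}) '' S)) :
    (∃ b c, b ∈ Subring.closure (↑(pPowers K n p) ∪ S) ∧
      c ∈ Subring.closure (↑(pPowers K n p) ∪ S) ∧ ¬ g ∣ b ∧ g ^ 2 ∣ b * f + c) ∨
    residueGrad (.span {g}) g ∈ Submodule.span (Ideal.span {g}).ResidueField
      (residueGrad (.span {g}) '' S) := by
  obtain ⟨b, c, hb, hc, hgb, h, hh⟩ := exists_dvd_mul_add_of_residueGrad_mem_span_insert (p := p)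
    (Submodule.span_mono (Set.subset_insert _ _) hf)
  by_cases hgh : g ∣ h
  · exact .inl ⟨b, c, hb, hc, hgb, hh ▸ sq g ▸ mul_dvd_mul_left g hgh⟩
  have hh0 : algebraMap _ (Ideal.span {g}).ResidueField h ≠ 0 := by
    rwa [Ne, Ideal.algebraMap_residueField_eq_zero, Ideal.mem_span_singleton]
  right
  rw [← Submodule.smul_mem_iff _ hh0,
    ← residueGrad_mul_of_mem (Ideal.mem_span_singleton_self g), ← hh, map_add, residueGrad_mul]
  exact add_mem (add_mem (Submodule.smul_mem _ _ hf)
    (Submodule.smul_mem _ _ (residueGrad_mem_span_of_mem_closure hb)))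
    (residueGrad_mem_span_of_mem_closure hc)

end PrimePolynomial

theorem forall_jacMinor_mem_iff {K : Type*} [CommRing K] {n m : ℕ}
    {P : Ideal (MvPolynomial (Fin n) K)} [P.IsPrime] {f : Fin m → MvPolynomial (Fin n) K} :
    (∀ j, jacMinor f j ∈ P) ↔ ¬ LinearIndependent P.ResidueField (residueGrad P ∘ f) := by
  have hrow := linearIndependent_row_iff_exists_det_submatrix_ne_zero
    (Matrix.of (residueGrad P ∘ f))
  refine Iff.trans ?_ (not_congr hrow).symm
  push Not
  refine forall_congr' fun j => ?_
  rw [← Ideal.algebraMap_residueField_eq_zero, jacMinor, RingHom.map_det]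
  rfl

theorem forall_dvd_jacMinor_iff_exists_mem_span {K : Type*} [CommRing K] {n m : ℕ}
    {g : MvPolynomial (Fin n) K} [(Ideal.span {g}).IsPrime]
    {f : Fin m → MvPolynomial (Fin n) K} :
    (∀ j, g ∣ jacMinor f j) ↔
      ∃ i, residueGrad (.span {g}) (f i) ∈ Submodule.span (Ideal.span {g}).ResidueField
        (residueGrad (.span {g}) '' (f '' {l | l ≠ i})) := by
  simp only [← Ideal.mem_span_singleton, forall_jacMinor_mem_iff,
    not_linearIndependent_iff_exists_mem_span, Set.image_image, Function.comp_apply]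

theorem irreducible_dvd_dgcd_iff_general
    {K : Type*} [CommRing K] [IsDomain K] (p : ℕ) (hp : 0 < p) [CharP K p] {n m : ℕ}
    (f : Fin m → MvPolynomial (Fin n) K) (g : MvPolynomial (Fin n) K) (hg : Prime g) :
    (∀ j : Fin m → Fin n, g ∣ jacMinor f j) ↔
      ((g ∉ pPowers K n p ∧ ∃ i : Fin m, ∃ b c : MvPolynomial (Fin n) K,
          b ∈ Ri K p f i ∧ c ∈ Ri K p f i ∧ ¬ g ∣ b ∧ g ^ 2 ∣ b * f i + c) ∨
       (g ∈ pPowers K n p ∧ ∃ i : Fin m, ∃ b c : MvPolynomial (Fin n) K,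
          b ∈ Ri K p f i ∧ c ∈ Ri K p f i ∧ ¬ g ∣ b ∧ g ∣ b * f i + c) ∨
       (∃ i j : Fin m, i ≠ j ∧ ∃ b₁ b₂ c₁ c₂ : MvPolynomial (Fin n) K,
          b₁ ∈ Rij K p f i j ∧ b₂ ∈ Rij K p f i j ∧
          c₁ ∈ Rij K p f i j ∧ c₂ ∈ Rij K p f i j ∧
          ¬ g ∣ b₁ ∧ ¬ g ∣ b₂ ∧ g ∣ b₁ * f i + c₁ ∧ g ∣ b₂ * f j + c₂)) := by
  have : NeZero p := ⟨hp.ne'⟩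
  have : Fact p.Prime := CharP.char_is_prime_of_pos K p
  have : (Ideal.span {g}).IsPrime := (Ideal.span_singleton_prime hg.ne_zero).2 hg
  rw [forall_dvd_jacMinor_iff_exists_mem_span]
  constructor
  · rintro ⟨i, hi⟩
    by_cases hgB : g ∈ pPowers K n p
    · exact .inr (.inl ⟨hgB, i, exists_dvd_mul_add_of_residueGrad_mem_span_insert
        (Submodule.span_mono (Set.subset_insert _ _) hi)⟩)
    obtain hsq | hgi := exists_sq_dvd_or_residueGrad_self_mem_span (p := p) hi
    · exact .inl ⟨hgB, i, hsq⟩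
    rw [← Set.image_comp] at hi hgi
    obtain ⟨j, hij, hvi, hvj⟩ := exists_ne_mem_span_insert_of_mem_span
      (mt residueGrad_self_eq_zero_iff.1 hgB) hgi hi
    rw [Set.image_comp] at hvi hvj
    obtain ⟨b₁, c₁, hb₁, hc₁, hgb₁, hdvd₁⟩ :=
      exists_dvd_mul_add_of_residueGrad_mem_span_insert (p := p) hvi
    obtain ⟨b₂, c₂, hb₂, hc₂, hgb₂, hdvd₂⟩ :=
      exists_dvd_mul_add_of_residueGrad_mem_span_insert (p := p) hvj
    exact .inr (.inr ⟨i, j, hij, b₁, b₂, c₁, c₂, hb₁, hb₂, hc₁, hc₂, hgb₁, hgb₂, hdvd₁, hdvd₂⟩)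
  · rintro (⟨-, i, b, c, hb, hc, hgb, hdvd⟩ | ⟨hgB, i, b, c, hb, hc, hgb, hdvd⟩ |
      ⟨i, j, hij, b₁, b₂, c₁, c₂, hb₁, hb₂, hc₁, hc₂, hgb₁, hgb₂, hdvd₁, hdvd₂⟩)
    · exact ⟨i, residueGrad_mem_span_of_sq_dvd hb hc hgb hdvd⟩
    · have hi := residueGrad_mem_span_insert_of_dvd hb hc hgb hdvd
      rw [residueGrad_self_eq_zero_iff.2 hgB, Submodule.span_insert_zero] at hi
      exact ⟨i, hi⟩
    · have hi := residueGrad_mem_span_insert_of_dvd hb₁ hc₁ hgb₁ hdvd₁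
      have hj := residueGrad_mem_span_insert_of_dvd hb₂ hc₂ hgb₂ hdvd₂
      simp only [← Set.image_comp] at hi hj ⊢
      exact exists_mem_span_of_mem_span_insert (v := residueGrad (.span {g}) ∘ f) hij hi hj

/-- **Freudenburg's lemma in positive characteristic for `m` polynomials (Theorem 1).**
An irreducible `g` divides `dgcd(f₁,…,f_m)` (i.e. divides every `m×m` jacobian minor) iff
one of the conditions (i)–(iii) on factors holds. -/
theorem irreducible_dvd_dgcd_iff
    {K : Type*} [CommRing K] [IsDomain K] [UniqueFactorizationMonoid K]
    (p : ℕ) (hp : 0 < p) [CharP K p] {n m : ℕ} (hm : 1 ≤ m)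
    (f : Fin m → MvPolynomial (Fin n) K)
    (g : MvPolynomial (Fin n) K) (hg : Irreducible g) :
    (∀ j : Fin m → Fin n, g ∣ jacMinor f j) ↔
      -- (i)
      ((g ∉ pPowers K n p ∧ ∃ i : Fin m, ∃ b c : MvPolynomial (Fin n) K,
          b ∈ Ri K p f i ∧ c ∈ Ri K p f i ∧ ¬ g ∣ b ∧ g ^ 2 ∣ b * f i + c) ∨
      -- (ii)
       (g ∈ pPowers K n p ∧ ∃ i : Fin m, ∃ b c : MvPolynomial (Fin n) K,
          b ∈ Ri K p f i ∧ c ∈ Ri K p f i ∧ ¬ g ∣ b ∧ g ∣ b * f i + c) ∨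
      -- (iii)
       (∃ i j : Fin m, i ≠ j ∧ ∃ b₁ b₂ c₁ c₂ : MvPolynomial (Fin n) K,
          b₁ ∈ Rij K p f i j ∧ b₂ ∈ Rij K p f i j ∧
          c₁ ∈ Rij K p f i j ∧ c₂ ∈ Rij K p f i j ∧
          ¬ g ∣ b₁ ∧ ¬ g ∣ b₂ ∧ g ∣ b₁ * f i + c₁ ∧ g ∣ b₂ * f j + c₂)) :=
  irreducible_dvd_dgcd_iff_general p hp f g hg.prime
end

section
/- Let A be a domain of characteristic p > 0 and B a subring of A containing A^p, and assume A is finitely generated as a B-algebra. For elements f_1,…,f_m ∈ A the following are all equivalent: (1) f_1,…,f_m form a p-basis over B of the ring of constants of some B-derivation of A; (2) f_1,…,f_m are p-independent over B and B[f_1,…,f_m] is the ring of constants of some B-derivation of A; (3) f_1,…,f_m are p-independent over B and C_B(f_1,…,f_m) = B[f_1,…,f_m]; (4) f_1,…,f_m form a p-basis of C_B(f_1,…,f_m) over B. -/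
/-!
As `p`-th powers lie in `B`, the `p`-monomials span `B[f]` over `B`. Hence `f` is a `p`-basis of a
subring exactly when it is `p`-independent and the subring is `B[f]`; this gives (1) ⇔ (2) and
(3) ⇔ (4). A fraction of constants that lies in `A` is a constant, whence (2) ⇒ (3).

For (3) ⇒ (2), let `K = Frac B[f]` and `L = Frac A`, a finite extension with `L ^ p ⊆ K`. A
`K`-derivation of `L` whose constants are exactly `K` is built by adjoining `p`-th roots one at a
time. Given such a `D` on `M`, it is `K`-linear and kills `1`, so by finite dimension it misses some
`u`; extend it to `M(x)` by `x ↦ u`. A constant of positive degree in `x` would force `u` into the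
image of `D`. Since `A` is finitely generated, a nonzero multiple of the final derivation maps `A`
into `A`, and its constants on `A` are `K ∩ A = C_B(f)`.
-/

open Polynomial

section ExtendToPolynomials

variable {K M : Type*} [CommRing K] [CommRing M] [Algebra K M]

/-- The derivation of `M[X]` that extends `D : M → M` and sends `X` to `u`; it descends to
extensions of `M` by a `p`-th root. -/
noncomputable def polynomialExtension (D : Derivation K M M) (u : M) : Derivation K M[X] M[X] :=
  PolynomialModule.equivPolynomialSelf.compDer D.mapCoeffs +
    C u • (derivative' (R := M)).restrictScalars K

variable (D : Derivation K M M) (u : M)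

theorem coeff_polynomialExtension (P : M[X]) (i : ℕ) :
    (polynomialExtension D u P).coeff i = D (P.coeff i) + P.coeff (i + 1) * (i + 1) * u := by
  have coeff_mapCoeffs :
      (PolynomialModule.equivPolynomial (D.mapCoeffs P)).coeff i = D (P.coeff i) := rfl
  simp [polynomialExtension, coeff_derivative, coeff_mapCoeffs, mul_comm u]

theorem natDegree_polynomialExtension_le (P : M[X]) :
    (polynomialExtension D u P).natDegree ≤ P.natDegree := by
  refine natDegree_le_iff_coeff_eq_zero.2 fun i hi => ?_
  simp [coeff_polynomialExtension, coeff_eq_zero_of_natDegree_lt hi,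
    coeff_eq_zero_of_natDegree_lt (hi.trans i.lt_succ_self)]

theorem polynomialExtension_X_pow_sub_C (p : ℕ) [CharP M p] (a : K) :
    polynomialExtension D u (X ^ p - C (algebraMap K M a)) = 0 := by
  rw [show (C (algebraMap K M a) : M[X]) = algebraMap K M[X] a from rfl, map_sub,
    Derivation.map_algebraMap, Derivation.leibniz_pow]
  simp

end ExtendToPolynomials

theorem minpoly_eq_X_pow_sub_C {M N : Type*} [Field M] [Field N] [Algebra M N] (p : ℕ)
    [Fact p.Prime] [CharP N p] {x : N} {a : M} (hxa : x ^ p = algebraMap M N a)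
    (hx : x ∉ (algebraMap M N).range) : minpoly M x = X ^ p - C a := by
  have hp : p.Prime := Fact.out
  have hirr : Irreducible (X ^ p - C a) := by
    refine X_pow_sub_C_irreducible_of_prime hp fun b hb => hx ⟨b, frobenius_inj N p ?_⟩
    rw [frobenius_def, frobenius_def, ← map_pow, hb, hxa]
  exact (minpoly.eq_of_irreducible_of_monic hirr (by simp [hxa])
    (monic_X_pow_sub_C a hp.ne_zero)).symm

theorem exists_derivation_aeval_gen {K M N : Type*} [CommRing K] [Field M] [CommRing N]
    [Algebra K M] [Algebra K N] [Algebra M N] [IsScalarTower K M N]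
    (pb : PowerBasis M N) (D : Derivation K M M) (u : M)
    (hmin : polynomialExtension D u (minpoly M pb.gen) = 0) :
    ∃ D' : Derivation K N N,
      ∀ P, D' (aeval pb.gen P) = aeval pb.gen (polynomialExtension D u P) := by
  let φ : M[X] →ₐ[K] N := (aeval pb.gen).restrictScalars K
  have hφ : Function.Surjective φ := fun y =>
    let ⟨P, hP⟩ := pb.exists_eq_aeval' y
    ⟨P, hP.symm⟩
  have map_ker (P : M[X]) (hP : φ P = 0) : φ (polynomialExtension D u P) = 0 := by
    obtain ⟨Q, rfl⟩ := minpoly.dvd M pb.gen hP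
    simp [φ, Derivation.leibniz, hmin]
  exact ⟨Derivation.liftOfSurjective hφ map_ker, Derivation.liftOfSurjective_apply hφ map_ker⟩

section TrivialConstants

/-- The ring of constants of the `K`-derivation `D` is no larger than the image of `K`. Only this
inclusion is stated, since a `K`-derivation always vanishes on the image of `K`. -/
def HasTrivialConstants {K M : Type*} [CommRing K] [CommRing M] [Algebra K M]
    (D : Derivation K M M) : Prop :=
  ∀ y, D y = 0 → y ∈ (algebraMap K M).range

theorem HasTrivialConstants.eq_zero_iff {K M : Type*} [CommRing K] [CommRing M] [Algebra K M]
    {D : Derivation K M M} (hD : HasTrivialConstants D) {y : M} :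
    D y = 0 ↔ y ∈ (algebraMap K M).range :=
  ⟨hD y, fun ⟨k, hk⟩ => hk ▸ D.map_algebraMap k⟩

theorem exists_hasTrivialConstants_of_algEquiv {K M N : Type*} [CommRing K] [CommRing M]
    [CommRing N] [Algebra K M] [Algebra K N] (e : M ≃ₐ[K] N)
    (h : ∃ D : Derivation K M M, HasTrivialConstants D) :
    ∃ D : Derivation K N N, HasTrivialConstants D := by
  obtain ⟨D, hD⟩ := h
  have map_ker (x : M) (hx : e x = 0) : e (D x) = 0 := by
    simp [(map_eq_zero_iff e e.injective).1 hx]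
  refine ⟨Derivation.liftOfSurjective e.surjective map_ker, fun y hy => ?_⟩
  obtain ⟨z, rfl⟩ := e.surjective y
  rw [Derivation.liftOfSurjective_apply, map_eq_zero_iff e e.injective] at hy
  obtain ⟨k, rfl⟩ := hD z hy
  exact ⟨k, (e.commutes k).symm⟩

theorem not_surjective_derivation {K M : Type*} [Field K] [CommRing M] [Nontrivial M] [Algebra K M]
    [FiniteDimensional K M] (D : Derivation K M M) : ¬ Function.Surjective D := by
  intro hsurj
  have hinj : Function.Injective (D : M →ₗ[K] M) := LinearMap.injective_iff_surjective.2 hsurj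
  exact one_ne_zero (hinj (by simp : D 1 = D 0))

variable {K M : Type*} [Field K] [Field M] [Algebra K M]

theorem HasTrivialConstants.natDegree_eq_zero {D : Derivation K M M} (hD : HasTrivialConstants D)
    {u : M} (hu : u ∉ Set.range D) (p : ℕ) [CharP M p] {P : M[X]} (hdeg : P.natDegree < p)
    (hP : polynomialExtension D u P = 0) : P.natDegree = 0 := by
  have hcoeff (i : ℕ) : D (P.coeff i) + P.coeff (i + 1) * (i + 1) * u = 0 := by
    rw [← coeff_polynomialExtension, hP, coeff_zero]
  -- The leading coefficient is a constant `k`, so the next equation exhibits `u` as a value of `D`.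
  by_contra hne
  obtain ⟨n, hn⟩ := Nat.exists_eq_succ_of_ne_zero hne
  have hlead : P.coeff (n + 1) ≠ 0 := by
    rw [← Nat.succ_eq_add_one, ← hn, coeff_natDegree, leadingCoeff_ne_zero]
    rintro rfl
    exact hne natDegree_zero
  have hcast : (n + 1 : M) ≠ 0 := by
    rw [← Nat.cast_add_one, Ne, CharP.cast_eq_zero_iff M p]
    exact Nat.not_dvd_of_pos_of_lt n.succ_pos (by lia)
  obtain ⟨k, hk⟩ : P.coeff (n + 1) ∈ (algebraMap K M).range := by
    refine hD _ ?_
    simpa [coeff_eq_zero_of_natDegree_lt (show P.natDegree < n + 1 + 1 by lia)] using hcoeff (n + 1)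
  refine hu ⟨(-(k * (n + 1))⁻¹ : K) • P.coeff n, ?_⟩
  rw [← hk] at hlead
  rw [D.map_smul, eq_neg_of_add_eq_zero_left (hcoeff n), ← hk, Algebra.smul_def]
  simp only [map_neg, map_inv₀, map_mul, map_add, map_natCast, map_one]
  field_simp

theorem HasTrivialConstants.exists_C_eq {D : Derivation K M M} (hD : HasTrivialConstants D)
    {u : M} (hu : u ∉ Set.range D) (p : ℕ) [CharP M p] {P : M[X]} (hdeg : P.natDegree < p)
    (hP : polynomialExtension D u P = 0) : ∃ k : K, P = C (algebraMap K M k) := by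
  have hP₀ := eq_C_of_natDegree_eq_zero (hD.natDegree_eq_zero hu p hdeg hP)
  have hconst : D (P.coeff 0) = 0 := by
    have := coeff_polynomialExtension D u P 0
    rw [hP, hP₀] at this
    simpa using this.symm
  obtain ⟨k, hk⟩ := hD _ hconst
  exact ⟨k, by rw [hk, ← hP₀]⟩

theorem HasTrivialConstants.exists_of_powerBasis {N : Type*} [Field N] [Algebra K N]
    [Algebra M N] [IsScalarTower K M N] [FiniteDimensional K M] (p : ℕ) [Fact p.Prime] [CharP N p]
    {D : Derivation K M M} (hD : HasTrivialConstants D) (pb : PowerBasis M N)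
    (hpow : pb.gen ^ p ∈ (algebraMap K N).range) (hgen : pb.gen ∉ (algebraMap M N).range) :
    ∃ D' : Derivation K N N, HasTrivialConstants D' := by
  have : CharP M p := (algebraMap M N).charP (algebraMap M N).injective p
  obtain ⟨a, ha⟩ := hpow
  have hmin : minpoly M pb.gen = X ^ p - C (algebraMap K M a) :=
    minpoly_eq_X_pow_sub_C p (by rw [← ha, IsScalarTower.algebraMap_apply K M N]) hgen
  have hdim : pb.dim = p := by rw [← pb.natDegree_minpoly, hmin, natDegree_X_pow_sub_C]
  obtain ⟨u, hu⟩ : ∃ u, u ∉ Set.range D := by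
    simpa [Function.Surjective] using not_surjective_derivation D
  obtain ⟨D', hD'⟩ := exists_derivation_aeval_gen pb D u
    (by rw [hmin, polynomialExtension_X_pow_sub_C])
  refine ⟨D', fun y hy => ?_⟩
  obtain ⟨P, hdeg, rfl⟩ := pb.exists_eq_aeval y
  have hP : polynomialExtension D u P = 0 := by
    refine eq_zero_of_dvd_of_natDegree_lt (minpoly.dvd M pb.gen (hD' P ▸ hy)) ?_
    rw [pb.natDegree_minpoly]
    exact (natDegree_polynomialExtension_le D u P).trans_lt hdeg
  obtain ⟨k, rfl⟩ := hD.exists_C_eq hu p (hdim ▸ hdeg) hP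
  exact ⟨k, by rw [aeval_C, ← IsScalarTower.algebraMap_apply]⟩

open IntermediateField in
theorem exists_hasTrivialConstants {L : Type*} [Field L] [Algebra K L] [FiniteDimensional K L]
    (p : ℕ) [Fact p.Prime] [CharP L p] (hpow : ∀ x : L, x ^ p ∈ (algebraMap K L).range) :
    ∃ D : Derivation K L L, HasTrivialConstants D := by
  refine exists_hasTrivialConstants_of_algEquiv topEquiv
    (induction_on_adjoin (fun E => ∃ D : Derivation K E E, HasTrivialConstants D) ?_ ?_ ⊤)
  · exact ⟨0, fun y _ => (mem_bot.1 y.2).imp fun k hk => Subtype.ext hk⟩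
  rintro E x ⟨D, hD⟩
  by_cases hx : x ∈ E
  · have hEx : E⟮x⟯ = ⊥ := adjoin_simple_eq_bot_iff.2 (mem_bot.2 ⟨⟨x, hx⟩, rfl⟩)
    rw [hEx, restrictScalars_bot_eq_self]
    exact ⟨D, hD⟩
  · have : CharP E⟮x⟯ p := (algebraMap E⟮x⟯ L).charP (algebraMap E⟮x⟯ L).injective p
    have hpow' : AdjoinSimple.gen E x ^ p ∈ (algebraMap K E⟮x⟯).range :=
      (hpow x).imp fun a ha => Subtype.ext ha
    have hgen : AdjoinSimple.gen E x ∉ (algebraMap E E⟮x⟯).range := by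
      rintro ⟨b, hb⟩
      have hbx : (b : L) = x := congrArg (algebraMap E⟮x⟯ L) hb
      exact hx (hbx ▸ b.2)
    obtain ⟨D', hD'⟩ : ∃ D' : Derivation K E⟮x⟯ E⟮x⟯, HasTrivialConstants D' :=
      hD.exists_of_powerBasis p (adjoin.powerBasis (.of_finite E x)) hpow' hgen
    exact ⟨D', hD'⟩

end TrivialConstants

section FractionField

open nonZeroDivisors

theorem exists_linearMap_algebraMap_eq_smul {A L M : Type*} [CommRing A] [CommRing L]
    [Algebra A L] [IsFractionRing A L] [AddCommGroup M] [Module A M] [Module.Finite A M]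
    (g : M →ₗ[A] L) :
    ∃ c ∈ A⁰, ∃ h : M →ₗ[A] A, ∀ x, algebraMap A L (h x) = c • g x := by
  obtain ⟨c, hc, hint⟩ := FractionalIdeal.isFractional_of_fg (S := A⁰) (Module.Finite.fg_top.map g)
  have hrange (x : M) : (c • g) x ∈ LinearMap.range (Algebra.linearMap A L) :=
    hint (g x) ⟨x, trivial, rfl⟩
  let e := LinearEquiv.ofInjective (Algebra.linearMap A L) (IsFractionRing.injective A L)
  refine ⟨c, hc, e.symm.toLinearMap ∘ₗ (c • g).codRestrict _ hrange, fun x => ?_⟩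
  exact congrArg Subtype.val (e.apply_symm_apply ((c • g).codRestrict _ hrange x))

theorem exists_derivation_algebraMap_eq_smul {R A L : Type*} [CommRing R] [CommRing A]
    [CommRing L] [Algebra R A] [Algebra.EssFiniteType R A] [Algebra A L] [Algebra R L]
    [IsScalarTower R A L] [IsFractionRing A L] (D : Derivation R A L) :
    ∃ c ∈ A⁰, ∃ d : Derivation R A A, ∀ a, algebraMap A L (d a) = c • D a := by
  obtain ⟨c, hc, h, hh⟩ := exists_linearMap_algebraMap_eq_smul D.liftKaehlerDifferential
  exact ⟨c, hc, h.compDer (KaehlerDifferential.D R A), fun a => by simp [hh]⟩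

section

variable {R A K L : Type*} [CommRing R] [CommRing A] [Field K] [Field L] [Algebra R A]
  [Algebra R K] [Algebra A L] [Algebra K L] [Algebra R L] [IsScalarTower R A L]
  [IsScalarTower R K L] [IsFractionRing A L]

variable (K L) in
theorem algebraMap_mem_range_algebraMap_iff [IsDomain R] [IsFractionRing R K] (a : A) :
    algebraMap A L a ∈ (algebraMap K L).range ↔
      ∃ s t : R, s ≠ 0 ∧ s • a = algebraMap R A t := by
  have map_ne_zero {s : R} (hs : s ≠ 0) : algebraMap R L s ≠ 0 := by
    simpa [IsScalarTower.algebraMap_apply R K L] using hs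
  have map_smul (s : R) : algebraMap A L (s • a) = algebraMap R L s * algebraMap A L a := by
    rw [Algebra.smul_def, map_mul, ← IsScalarTower.algebraMap_apply]
  have map_frac (s t : R) : algebraMap K L (algebraMap R K t / algebraMap R K s) =
      algebraMap R L t / algebraMap R L s := by
    simp only [map_div₀, ← IsScalarTower.algebraMap_apply]
  have eq_frac_iff {s : R} (t : R) (hs : s ≠ 0) :
      algebraMap R L t / algebraMap R L s = algebraMap A L a ↔ s • a = algebraMap R A t := by
    rw [← (IsFractionRing.injective A L).eq_iff, map_smul, ← IsScalarTower.algebraMap_apply,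
      div_eq_iff (map_ne_zero hs), eq_comm, mul_comm]
  constructor
  · rintro ⟨k, hk⟩
    obtain ⟨t, s, hs, rfl⟩ := IsFractionRing.div_surjective (A := R) k
    have hs₀ := nonZeroDivisors.ne_zero hs
    exact ⟨s, t, hs₀, (eq_frac_iff t hs₀).1 (map_frac s t ▸ hk)⟩
  · rintro ⟨s, t, hs, hst⟩
    exact ⟨_, (map_frac s t).trans ((eq_frac_iff t hs).2 hst)⟩

variable (K) in
theorem pow_mem_range_algebraMap_of_isFractionRing [IsDomain A] {p : ℕ}
    (hpow : ∀ a : A, a ^ p ∈ (algebraMap R A).range) (x : L) :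
    x ^ p ∈ (algebraMap K L).range := by
  have hpowA (a : A) : algebraMap A L a ^ p ∈ (algebraMap K L).range := by
    obtain ⟨r, hr⟩ := hpow a
    exact ⟨algebraMap R K r, by
      rw [← map_pow, ← hr, ← IsScalarTower.algebraMap_apply, ← IsScalarTower.algebraMap_apply]⟩
  obtain ⟨a, b, -, rfl⟩ := IsFractionRing.div_surjective (A := A) x
  rw [div_pow]
  exact (algebraMap K L).fieldRange.div_mem (hpowA a) (hpowA b)

end

attribute [local instance] FractionRing.liftAlgebra

theorem exists_derivation_eq_zero_iff {R A : Type*} [CommRing R] [IsDomain R] [CommRing A]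
    [IsDomain A] [Algebra R A] [FaithfulSMul R A] [Algebra.FiniteType R A]
    (p : ℕ) [Fact p.Prime] [CharP A p] (hpow : ∀ a : A, a ^ p ∈ (algebraMap R A).range) :
    ∃ d : Derivation R A A, ∀ a, d a = 0 ↔ ∃ s t : R, s ≠ 0 ∧ s • a = algebraMap R A t := by
  let K := FractionRing R
  let L := FractionRing A
  have : Algebra.IsIntegral R A := ⟨fun a => .of_pow (Fact.out : p.Prime).pos <| by
    obtain ⟨r, hr⟩ := hpow a
    exact hr ▸ isIntegral_algebraMap⟩
  have : Module.Finite R A := Algebra.IsIntegral.finite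
  have : CharP L p := charP_of_injective_algebraMap (IsFractionRing.injective A L) p
  obtain ⟨D, hD⟩ := exists_hasTrivialConstants (K := K) (L := L) p
    (pow_mem_range_algebraMap_of_isFractionRing K hpow)
  obtain ⟨c, hc, d, hd⟩ :=
    exists_derivation_algebraMap_eq_smul ((D.restrictScalars R).compAlgebraMap A)
  refine ⟨d, fun a => ?_⟩
  calc d a = 0 ↔ c • D (algebraMap A L a) = 0 := by
        rw [← IsFractionRing.to_map_eq_zero_iff (K := L), hd]; rfl
    _ ↔ D (algebraMap A L a) = 0 := smul_eq_zero_iff_right (nonZeroDivisors.ne_zero hc)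
    _ ↔ algebraMap A L a ∈ (algebraMap K L).range := hD.eq_zero_iff
    _ ↔ _ := algebraMap_mem_range_algebraMap_iff K L a

end FractionField

section PBasis

variable {A : Type*} [CommRing A] {B : Subring A} {m : ℕ} {f : Fin m → A} {p : ℕ}

variable (B f) in
theorem closure_union_range_eq_adjoin :
    Subring.closure (↑B ∪ Set.range f) = (Algebra.adjoin B (Set.range f)).toSubring := by
  rw [Algebra.adjoin_eq_ring_closure]
  congr
  exact Subtype.range_coe.symm

theorem prod_pow_mem_span_pMonomial (hp : 0 < p) (hf : ∀ i, f i ^ p ∈ B) (e : Fin m → ℕ) :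
    ∏ i, f i ^ e i ∈ Submodule.span B (Set.range (pMonomial (p := p) f)) := by
  let b : B := ⟨∏ i, (f i ^ p) ^ (e i / p), B.prod_mem fun i _ => B.pow_mem (hf i) _⟩
  let α : Fin m → Fin p := fun i => ⟨e i % p, Nat.mod_lt _ hp⟩
  have hfactor : ∏ i, f i ^ e i = b • pMonomial f α := by
    simp only [Subring.smul_def, smul_eq_mul, pMonomial, b, α,
      ← Finset.prod_mul_distrib, ← pow_mul, ← pow_add, Nat.div_add_mod]
  exact hfactor ▸ Submodule.smul_mem _ b (Submodule.subset_span ⟨α, rfl⟩)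

theorem span_range_pMonomial (hp : 0 < p) (hf : ∀ i, f i ^ p ∈ B) :
    Submodule.span B (Set.range (pMonomial (p := p) f)) =
      Subalgebra.toSubmodule (Algebra.adjoin B (Set.range f)) := by
  rw [Algebra.adjoin_eq_span]
  refine le_antisymm (Submodule.span_mono ?_) (Submodule.span_le.2 fun x hx => ?_)
  · rintro _ ⟨α, rfl⟩
    exact Submonoid.mem_closure_range_iff_of_fintype.2 ⟨_, rfl⟩
  · obtain ⟨e, rfl⟩ := Submonoid.mem_closure_range_iff_of_fintype.1 hx
    exact prod_pow_mem_span_pMonomial hp hf e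

theorem mem_closure_iff_exists_sum_pMonomial (hp : 0 < p) (hf : ∀ i, f i ^ p ∈ B) {r : A} :
    r ∈ Subring.closure (↑B ∪ Set.range f) ↔
      ∃ b : (Fin m → Fin p) → A, (∀ α, b α ∈ B) ∧ r = ∑ α, b α * pMonomial f α := by
  rw [closure_union_range_eq_adjoin, Subalgebra.mem_toSubring, ← Subalgebra.mem_toSubmodule,
    ← span_range_pMonomial hp hf, Submodule.mem_span_range_iff_exists_fun]
  constructor
  · rintro ⟨c, rfl⟩
    exact ⟨fun α => c α, fun α => (c α).2, rfl⟩
  · rintro ⟨b, hb, rfl⟩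
    exact ⟨fun α => ⟨b α, hb α⟩, rfl⟩

theorem isPBasis_iff (hp : 0 < p) (hf : ∀ i, f i ^ p ∈ B) (R : Subring A) :
    IsPBasis B R p f ↔
      pIndependent B p f ∧ (R : Set A) = Subring.closure (↑B ∪ Set.range f) := by
  constructor
  · rintro ⟨hBR, hmono, hind, hgen⟩
    refine ⟨hind, Set.ext fun r => ?_⟩
    rw [SetLike.mem_coe, SetLike.mem_coe, mem_closure_iff_exists_sum_pMonomial hp hf]
    refine ⟨hgen r, ?_⟩
    rintro ⟨b, hb, rfl⟩
    exact R.sum_mem fun α _ => R.mul_mem (hBR (hb α)) (hmono α)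
  · rintro ⟨hind, hR⟩
    obtain rfl := SetLike.coe_injective hR
    have hfR (i : Fin m) : f i ∈ Subring.closure (↑B ∪ Set.range f) :=
      Subring.subset_closure (Or.inr ⟨i, rfl⟩)
    exact ⟨fun b hb => Subring.subset_closure (Or.inl hb),
      fun α => Subring.prod_mem _ fun i _ => Subring.pow_mem _ (hfR i) _, hind,
      fun r => (mem_closure_iff_exists_sum_pMonomial hp hf).1⟩

end PBasis

namespace IsBDerivation

variable {A : Type*} [CommRing A] {B : Subring A} {d : A → A}

/-- The ring of constants of a `B`-derivation, as a subring with carrier `{a | d a = 0}`. -/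
def constants (hd : IsBDerivation B d) : Subring A where
  carrier := {a | d a = 0}
  mul_mem' {x y} (hx : d x = 0) (hy : d y = 0) := by simp [hd.2.1, hx, hy]
  one_mem' := hd.2.2 1 B.one_mem
  add_mem' {x y} (hx : d x = 0) (hy : d y = 0) := by simp [hd.1, hx, hy]
  zero_mem' := hd.2.2 0 B.zero_mem
  neg_mem' {x} (hx : d x = 0) := by
    have hneg : d (-1) = 0 := hd.2.2 _ (B.neg_mem B.one_mem)
    simpa [hx, hneg] using hd.2.1 (-1) x

theorem isPBasis_iff (hd : IsBDerivation B d) {m p : ℕ} {f : Fin m → A} (hp : 0 < p)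
    (hf : ∀ i, f i ^ p ∈ B) :
    IsPBasis B {a | d a = 0} p f ↔
      pIndependent B p f ∧ {a | d a = 0} = (Subring.closure (↑B ∪ Set.range f) : Set A) :=
  _root_.isPBasis_iff hp hf hd.constants

theorem eq_zero_of_map_mul_eq_zero [NoZeroDivisors A] (hd : IsBDerivation B d) {a s : A}
    (hs₀ : s ≠ 0) (hs : d s = 0) (has : d (a * s) = 0) : d a = 0 := by
  rw [hd.2.1, hs, mul_zero, zero_add] at has
  exact (mul_eq_zero.1 has).resolve_left hs₀

end IsBDerivation

theorem isBDerivation_derivation {A : Type*} [CommRing A] {B C : Subring A} (hBC : B ≤ C)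
    (d : Derivation C A A) : IsBDerivation B d :=
  ⟨map_add d, d.leibniz, fun b hb => d.map_algebraMap ⟨b, hBC hb⟩⟩

theorem closure_subset_CB {A : Type*} [CommRing A] [Nontrivial A] (B : Subring A) {m : ℕ}
    (f : Fin m → A) : (Subring.closure (↑B ∪ Set.range f) : Set A) ⊆ CB B f :=
  fun r hr => ⟨1, r, Subring.one_mem _, hr, one_ne_zero, mul_one r⟩

theorem CB_eq_closure_of_constants_eq {A : Type*} [CommRing A] [IsDomain A] {B : Subring A}
    {m : ℕ} {f : Fin m → A} {d : A → A} (hd : IsBDerivation B d)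
    (hconst : {a | d a = 0} = (Subring.closure (↑B ∪ Set.range f) : Set A)) :
    CB B f = Subring.closure (↑B ∪ Set.range f) := by
  refine Set.Subset.antisymm ?_ (closure_subset_CB B f)
  rintro a ⟨s, _, hs, ht, hs₀, rfl⟩
  rw [← SetLike.mem_coe, ← hconst] at hs ht
  exact hconst ▸ hd.eq_zero_of_map_mul_eq_zero hs₀ hs ht

theorem finiteType_of_closure_union_eq_top {A : Type*} [CommRing A] {B C : Subring A} (hBC : B ≤ C)
    {s : Finset A} (hs : Subring.closure ((B : Set A) ∪ s) = ⊤) : Algebra.FiniteType C A := by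
  refine ⟨⟨s, eq_top_iff.2 fun a _ => ?_⟩⟩
  have hle : Subring.closure ((B : Set A) ∪ s) ≤ (Algebra.adjoin C (s : Set A)).toSubring :=
    Subring.closure_le.2 <| Set.union_subset
      (fun b hb => Subalgebra.algebraMap_mem _ (⟨b, hBC hb⟩ : C)) Algebra.subset_adjoin
  exact hle (hs ▸ Subring.mem_top a)

theorem exists_isBDerivation_constants_eq_CB {A : Type*} [CommRing A] [IsDomain A] (p : ℕ)
    [Fact p.Prime] [CharP A p] {B : Subring A} (hB : ∀ a : A, a ^ p ∈ B)
    (hfg : ∃ s : Finset A, Subring.closure ((B : Set A) ∪ (s : Set A)) = ⊤)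
    {m : ℕ} (f : Fin m → A) :
    ∃ d : A → A, IsBDerivation B d ∧ {a | d a = 0} = CB B f := by
  let C := Subring.closure (↑B ∪ Set.range f)
  have hBC : B ≤ C := fun b hb => Subring.subset_closure (Or.inl hb)
  obtain ⟨s, hs⟩ := hfg
  have : Algebra.FiniteType C A := finiteType_of_closure_union_eq_top hBC hs
  obtain ⟨d, hd⟩ := exists_derivation_eq_zero_iff (R := C) p fun a => ⟨⟨a ^ p, hBC (hB a)⟩, rfl⟩
  refine ⟨d, isBDerivation_derivation hBC d, Set.ext fun a => (hd a).trans ?_⟩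
  constructor
  · rintro ⟨s, t, hs, hst⟩
    exact ⟨s, t, s.2, t.2, by simpa using hs, (mul_comm a s).trans hst⟩
  · rintro ⟨s, t, hs, ht, hs₀, hst⟩
    exact ⟨⟨s, hs⟩, ⟨t, ht⟩, by simpa [Subtype.ext_iff] using hs₀, (mul_comm s a).trans hst⟩

/-- **Lemma 1 (finitely generated case).** If `A` is finitely generated as a `B`-algebra, then
the four conditions (1)–(4) are all equivalent. -/
theorem pBasis_conditions_tfae_of_fg
    {A : Type*} [CommRing A] [IsDomain A] (p : ℕ) (hp : 0 < p) [CharP A p]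
    (B : Subring A) (hB : ∀ a : A, a ^ p ∈ B)
    (hfg : ∃ s : Finset A, Subring.closure ((B : Set A) ∪ (s : Set A)) = ⊤)
    {m : ℕ} (f : Fin m → A) :
    List.TFAE [
      -- (1)
      (∃ d : A → A, IsBDerivation B d ∧ IsPBasis B {a | d a = 0} p f),
      -- (2)
      (pIndependent B p f ∧ ∃ d : A → A, IsBDerivation B d ∧
        {a | d a = 0} = ↑(Subring.closure (↑B ∪ Set.range f))),
      -- (3)
      (pIndependent B p f ∧ CB B f = ↑(Subring.closure (↑B ∪ Set.range f))),
      -- (4)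
      IsPBasis B (CB B f) p f] := by
  have hp_prime : Fact p.Prime := ⟨CharP.char_prime_of_ne_zero A hp.ne'⟩
  have hf (i : Fin m) : f i ^ p ∈ B := hB (f i)
  obtain ⟨δ, hδ, hδ_CB⟩ := exists_isBDerivation_constants_eq_CB p hB hfg f
  tfae_have 1 ↔ 2 := by
    rw [← exists_and_left]
    refine exists_congr fun d => ?_
    rw [and_left_comm]
    exact and_congr_right fun hd => hd.isPBasis_iff hp hf
  tfae_have 2 → 3 := fun ⟨hind, _, hd, hconst⟩ => ⟨hind, CB_eq_closure_of_constants_eq hd hconst⟩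
  tfae_have 3 → 2 := fun ⟨hind, hCB⟩ => ⟨hind, δ, hδ, hδ_CB.trans hCB⟩
  tfae_have 4 ↔ 3 := hδ_CB ▸ hδ.isPBasis_iff hp hf
  tfae_finish
end
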